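/- Let w be the fixed point of the morphism φ from the construction. Then every factor v of w of length at least 2 has some cyclic permutation that is not a factor of w. -/

import Mathlib

/-- The 12-letter alphabet `{x₁,…,x₆,y₁,…,y₆}`: `(false, i)` is `x_{i+1}`
and `(true, j)` is `y_{j+1}`. -/
abbrev Letter : Type := Bool × Fin 6

/-- The letter `x_{i+1}`. -/
def X (i : Fin 6) : Letter := (false, i)

/-- The letter `y_{j+1}`. -/
def Y (j : Fin 6) : Letter := (true, j)

/-- The morphism of the construction: `x₁↦x₁x₂y₁y₂, x₂↦x₁x₃y₁y₃, x₃↦x₁x₄y₁y₄,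
x₄↦x₁x₅y₁y₅, x₅↦x₁x₆y₁y₆, x₆↦x₂x₃y₂y₃, y₁↦x₂x₄y₂y₅, y₂↦x₂x₅y₃y₄, y₃↦x₂x₆y₂y₆,
y₄↦x₃x₄y₃y₅, y₅↦x₃x₅y₃y₆, y₆↦x₃x₆y₄y₅`. -/
def phi : Letter → List Letter := fun a =>
  [[X 0, X 1, Y 0, Y 1], [X 0, X 2, Y 0, Y 2], [X 0, X 3, Y 0, Y 3],
   [X 0, X 4, Y 0, Y 4], [X 0, X 5, Y 0, Y 5], [X 1, X 2, Y 1, Y 2],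
   [X 1, X 3, Y 1, Y 4], [X 1, X 4, Y 2, Y 3], [X 1, X 5, Y 1, Y 5],
   [X 2, X 3, Y 2, Y 4], [X 2, X 4, Y 2, Y 5], [X 2, X 5, Y 3, Y 4]].getD
    ((if a.1 then 6 else 0) + a.2.val) []

/-- A monoid morphism applied to a word. -/
def applyM {α : Type*} (φ : α → List α) (u : List α) : List α := u.flatMap φ

/-- The block of `len` consecutive letters of `w` starting at position `i`. -/
def toListW {α : Type*} (w : ℕ → α) (i len : ℕ) : List α :=
  (List.range len).map fun k => w (i + k)

/-- `v` is a factor (subword) of the right-infinite word `w`. -/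
def IsFactor {α : Type*} (v : List α) (w : ℕ → α) : Prop :=
  ∃ i, toListW w i v.length = v

/-- `v` is a prefix of the right-infinite word `w`. -/
def IsPrefixW {α : Type*} (v : List α) (w : ℕ → α) : Prop :=
  toListW w 0 v.length = v

/-- `w` is the fixed point `φ^ω(x₁)` of the (4-uniform) morphism `phi`:
for every `n`, `phi^n(x₁)` (a word of length `4^n`) is a prefix of `w`. -/
def IsFixedPointWord (w : ℕ → Letter) : Prop :=
  ∀ n : ℕ, toListW w 0 (4 ^ n) = (applyM phi)^[n] [X 0]

/-! If every conjugate of `v` is a factor of `w = φ(w)`, then every window of length `|v|` of the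
periodic word `v^ω` occurs in `w`; an infinite descent on `|v|` shows that this is impossible.
All images `φ(a)` have the shape `xxyy`. As soon as `|v| ≥ 3`, this pattern is visible in `v^ω`,
so that `|v| = 4m` and, after a shift, `v^ω = φ(d)` for a word `d` of period `m`. A letter is
determined by either half of its image, so a window of `v^ω` that starts in the middle of a block
desubstitutes to a window of `d` of length `m + 1`. For `m ≥ 2` the descent goes on; for `m = 1`
it ends with a square `aa` in `w`. Neither such a square nor a pair of factors `ab`, `ba` (the case
`|v| = 2`) exists in `w`, by inspection of `φ`.
-/

section Windows

variable {α : Type*}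

theorem toListW_add (w : ℕ → α) (i l m : ℕ) :
    toListW w i (l + m) = toListW w i l ++ toListW w (i + l) m := by
  simp [toListW, List.range_add, add_assoc, Function.comp_def]

theorem length_toListW (w : ℕ → α) (i l : ℕ) : (toListW w i l).length = l := by
  simp [toListW]

theorem toListW_eq_toListW_iff {w c : ℕ → α} {i s l : ℕ} :
    toListW w i l = toListW c s l ↔ ∀ k < l, w (i + k) = c (s + k) := by
  simp [toListW, List.map_inj_left]

theorem isFactor_toListW_iff {w c : ℕ → α} {s l : ℕ} :
    IsFactor (toListW c s l) w ↔ ∃ i, ∀ k < l, w (i + k) = c (s + k) := by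
  simp only [IsFactor, length_toListW, toListW_eq_toListW_iff]

theorem toListW_mul_eq_of_eq_applyM {φ : α → List α} {n : ℕ} (hφ : ∀ a, (φ a).length = n)
    {c d : ℕ → α} {M : ℕ} (h : toListW c 0 (n * M) = applyM φ (toListW d 0 M)) {q : ℕ}
    (hq : q < M) : toListW c (n * q) n = φ (d q) := by
  induction M with
  | zero => omega
  | succ M ih =>
    have hsplit : toListW c 0 (n * M) ++ toListW c (n * M) n =
        applyM φ (toListW d 0 M) ++ φ (d M) := by
      rw [mul_add_one, toListW_add, toListW_add] at h
      simpa [applyM, toListW] using h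
    obtain ⟨hinit, hlast⟩ := List.append_inj' hsplit (by rw [length_toListW, hφ])
    obtain hqM | rfl := Nat.lt_succ_iff_lt_or_eq.mp hq
    · exact ih hinit hqM
    · exact hlast

/-- The word `v^ω`, for a nonempty finite word `v`. -/
def periodicWord (v : List α) (hv : 0 < v.length) (n : ℕ) : α :=
  v[n % v.length]'(Nat.mod_lt n hv)

theorem toListW_periodicWord (v : List α) (hv : 0 < v.length) (s : ℕ) :
    toListW (periodicWord v hv) s v.length = v.rotate s := by
  apply List.ext_getElem
  · simp [toListW]
  · intro k _ _
    simp [toListW, periodicWord, List.getElem_rotate, add_comm]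

/-- `c = u^ω` for a word `u` of length `L > 0` all of whose conjugates are factors of `w`: these
conjugates are the windows of length `L` of `c`. -/
structure IsCircularFactor (c : ℕ → α) (L : ℕ) (w : ℕ → α) : Prop where
  periodic : Function.Periodic c L
  isFactor_window : ∀ s, IsFactor (toListW c s L) w

theorem isCircularFactor_periodicWord {v : List α} (hv : 0 < v.length) {w : ℕ → α}
    (h : ∀ s, IsFactor (v.rotate s) w) : IsCircularFactor (periodicWord v hv) v.length w where
  periodic n := by simp [periodicWord]
  isFactor_window s := by simpa only [toListW_periodicWord] using h s

namespace IsCircularFactor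

variable {c w : ℕ → α} {L : ℕ}

theorem exists_occurrence (h : IsCircularFactor c L w) (s : ℕ) :
    ∃ i, ∀ k < L, w (i + k) = c (s + k) :=
  isFactor_toListW_iff.mp (h.isFactor_window s)

theorem shift (h : IsCircularFactor c L w) (s : ℕ) :
    IsCircularFactor (fun n => c (s + n)) L w where
  periodic n := by simpa only [add_assoc] using h.periodic (s + n)
  isFactor_window t := by
    simpa only [isFactor_toListW_iff, add_assoc] using h.exists_occurrence (s + t)

end IsCircularFactor

theorem isFactor_rotate_of_forall_append {v : List α} {w : ℕ → α} (hv : IsFactor v w)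
    (h : ∀ a b : List α, v = a ++ b → a ≠ [] → b ≠ [] → IsFactor (b ++ a) w) (s : ℕ) :
    IsFactor (v.rotate s) w := by
  rw [← List.rotate_mod, List.rotate_eq_drop_append_take_mod, Nat.mod_mod]
  rcases eq_or_ne (v.take (s % v.length)) [] with htake | htake
  · have hdrop := List.take_append_drop (s % v.length) v
    rw [htake, List.nil_append] at hdrop
    rwa [htake, hdrop, List.append_nil]
  rcases eq_or_ne (v.drop (s % v.length)) [] with hdrop | hdrop
  · have htake := List.take_append_drop (s % v.length) v
    rw [hdrop, List.append_nil] at htake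
    rwa [hdrop, htake, List.nil_append]
  exact h _ _ (List.take_append_drop _ v).symm htake hdrop

end Windows

section Morphism

/-- The `k`-th letter of `φ(a)`, counted from `0`; meaningful for `k < 4` only. -/
def phiLetter (a : Letter) (k : ℕ) : Letter := (phi a).getD k (X 0)

theorem length_phi : ∀ a, (phi a).length = 4 := by decide

theorem phiLetter_fst_eq_true_iff :
    ∀ a, ∀ k < 4, (phiLetter a k).1 = true ↔ 2 ≤ k := by decide

theorem eq_of_phiLetter_zero_one :
    ∀ a b, phiLetter a 0 = phiLetter b 0 → phiLetter a 1 = phiLetter b 1 → a = b := by decide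

theorem eq_of_phiLetter_two_three :
    ∀ a b, phiLetter a 2 = phiLetter b 2 → phiLetter a 3 = phiLetter b 3 → a = b := by decide

theorem phiLetter_succ_ne_of_phiLetter_eq_succ :
    ∀ k < 3, ∀ a b, phiLetter a k = phiLetter b (k + 1) →
      phiLetter a (k + 1) ≠ phiLetter b k := by decide

theorem eq_zero_of_phiLetter_eq_X_zero : ∀ a, ∀ k < 4, phiLetter a k = X 0 → k = 0 := by decide

theorem eq_X_zero_and_fst_eq_true_of_phiLetter_eq :
    ∀ a b, phiLetter a 2 = phiLetter b 3 → ∀ b', phiLetter a 1 = phiLetter b' 0 →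
      b = X 0 ∧ b'.1 = true := by decide

/-- The infinite words of shape `xxyyxxyy…`, as all images under `φ` are. -/
def IsXXYY (c : ℕ → Letter) : Prop := ∀ n, (c n).1 = true ↔ 2 ≤ n % 4

theorem IsXXYY.mod_four_eq {c d : ℕ → Letter} (hc : IsXXYY c) (hd : IsXXYY d) {m n : ℕ}
    (h₀ : c m = d n) (h₁ : c (m + 1) = d (n + 1)) : m % 4 = n % 4 := by
  have hm := hc m
  have hm' := hc (m + 1)
  rw [h₀, hd] at hm
  rw [h₁, hd] at hm'
  omega

/-- `c = φ(d)` for infinite words `c` and `d`, read letter by letter in blocks of length `4`. -/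
def IsPhiImage (c d : ℕ → Letter) : Prop := ∀ q, ∀ k < 4, c (4 * q + k) = phiLetter (d q) k

theorem IsFixedPointWord.isPhiImage {w : ℕ → Letter} (hw : IsFixedPointWord w) :
    IsPhiImage w w := by
  intro q k hk
  have himage : toListW w 0 (4 * 4 ^ q) = applyM phi (toListW w 0 (4 ^ q)) := by
    rw [← pow_succ', hw, hw, Function.iterate_succ_apply']
  have hblock : toListW w (4 * q) 4 = phi (w q) :=
    toListW_mul_eq_of_eq_applyM length_phi himage (Nat.lt_pow_self (by norm_num))
  simp [phiLetter, ← hblock, toListW, hk]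

namespace IsPhiImage

variable {c d w : ℕ → Letter}

theorem apply_eq (h : IsPhiImage c d) (n : ℕ) : c n = phiLetter (d (n / 4)) (n % 4) := by
  rw [← h _ _ (Nat.mod_lt n (by norm_num)), Nat.div_add_mod]

theorem isXXYY (h : IsPhiImage c d) : IsXXYY c := fun n => by
  rw [h.apply_eq, phiLetter_fst_eq_true_iff _ _ (Nat.mod_lt n (by norm_num))]

theorem fst_succ_ne_true_of_eq_X_zero (h : IsPhiImage c d) {n : ℕ} (hn : c n = X 0) :
    (c (n + 1)).1 ≠ true := by
  rw [h.apply_eq] at hn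
  have hmod := eq_zero_of_phiLetter_eq_X_zero _ _ (Nat.mod_lt n (by norm_num)) hn
  rw [Ne, h.isXXYY]
  omega

theorem ne_of_eq_across_block_boundary (hw : IsPhiImage w w) {p q : ℕ}
    (h : w (4 * p + 1) = w (4 * (q + 1))) : w (4 * p + 2) ≠ w (4 * q + 3) := by
  intro h'
  rw [← add_zero (4 * (q + 1)), hw _ _ (by norm_num), hw _ _ (by norm_num)] at h
  rw [hw _ _ (by norm_num), hw _ _ (by norm_num)] at h'
  obtain ⟨hX, hy⟩ := eq_X_zero_and_fst_eq_true_of_phiLetter_eq _ _ h' _ h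
  exact hw.fst_succ_ne_true_of_eq_X_zero hX hy

theorem succ_ne_of_eq_succ (hw : IsPhiImage w w) {i j : ℕ} (h : w i = w (j + 1)) :
    w (i + 1) ≠ w j := by
  intro h'
  have hi := hw.isXXYY i
  have hi' := hw.isXXYY (i + 1)
  rw [h, hw.isXXYY] at hi
  rw [h', hw.isXXYY] at hi'
  obtain ⟨p, k, hk, rfl⟩ : ∃ p k, k < 4 ∧ i = 4 * p + k := ⟨i / 4, i % 4, by omega, by omega⟩
  obtain ⟨q, l, hl, rfl⟩ : ∃ q l, l < 4 ∧ j = 4 * q + l := ⟨j / 4, j % 4, by omega, by omega⟩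
  obtain ⟨rfl, hk₃⟩ | ⟨rfl, rfl⟩ | ⟨rfl, rfl⟩ :
      (k = l ∧ k < 3) ∨ (k = 1 ∧ l = 3) ∨ (k = 3 ∧ l = 1) := by omega
  · rw [add_assoc, hw _ _ (by omega), hw _ _ (by omega)] at h h'
    exact phiLetter_succ_ne_of_phiLetter_eq_succ k hk₃ _ _ h h'
  · exact hw.ne_of_eq_across_block_boundary h h'
  · exact hw.ne_of_eq_across_block_boundary h'.symm h.symm

theorem succ_ne (hw : IsPhiImage w w) (i : ℕ) : w (i + 1) ≠ w i :=
  fun h => hw.succ_ne_of_eq_succ h.symm h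

theorem periodic_of_mul_four (h : IsPhiImage c d) {m : ℕ} (hc : Function.Periodic c (4 * m)) :
    Function.Periodic d m := by
  have hletter : ∀ n, ∀ k < 4, phiLetter (d (n + m)) k = phiLetter (d n) k := fun n k hk => by
    rw [← h _ _ hk, ← h _ _ hk, ← hc (4 * n + k)]
    ring_nf
  exact fun n => eq_of_phiLetter_zero_one _ _ (hletter n 0 (by norm_num))
    (hletter n 1 (by norm_num))

end IsPhiImage

end Morphism

section Descent

namespace IsCircularFactor

variable {c d w : ℕ → Letter} {L m : ℕ}

theorem exists_isXXYY_shift (h : IsCircularFactor c L w) (hw : IsXXYY w) (hL : 3 ≤ L) :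
    ∃ s, IsXXYY fun n => c (s + n) := by
  obtain ⟨r, hr⟩ := h.exists_occurrence 0
  have hphase : ∀ n, (c n).1 = true ↔ 2 ≤ (r + n) % 4 := by
    intro n
    induction n using Nat.twoStepInduction with
    | zero => rw [← hw, hr 0 (by omega)]
    | one => rw [← hw, hr 1 (by omega)]
    | more n ih _ =>
      obtain ⟨i, hi⟩ := h.exists_occurrence n
      have hn := hw (i + 0)
      rw [hi 0 (by omega), add_zero, add_zero, ih] at hn
      rw [← hi 2 (by omega), hw]
      omega
  refine ⟨3 * r, fun n => ?_⟩
  rw [hphase]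
  omega

theorem four_dvd (h : IsCircularFactor c L w) (hc : IsXXYY c) : 4 ∣ L := by
  refine Nat.dvd_of_mod_eq_zero (hc.mod_four_eq hc (n := 0) ?_ ?_)
  · simpa only [zero_add] using h.periodic 0
  · simpa only [zero_add, add_comm] using h.periodic 1

theorem exists_occurrence_mod_four_eq (h : IsCircularFactor c L w) (hc : IsXXYY c)
    (hw : IsXXYY w) (hL : 2 ≤ L) (s : ℕ) :
    ∃ i, i % 4 = s % 4 ∧ ∀ k < L, w (i + k) = c (s + k) := by
  obtain ⟨i, hi⟩ := h.exists_occurrence s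
  exact ⟨i, hw.mod_four_eq hc (hi 0 (by omega)) (hi 1 (by omega)), hi⟩

theorem exists_isPhiImage (h : IsCircularFactor c L w) (hc : IsXXYY c) (hw : IsPhiImage w w)
    (hL : 4 ≤ L) : ∃ d, IsPhiImage c d := by
  have hblock : ∀ q, ∃ a, ∀ k < 4, c (4 * q + k) = phiLetter a k := fun q => by
    obtain ⟨i, hmod, hi⟩ := h.exists_occurrence_mod_four_eq hc hw.isXXYY (by omega) (4 * q)
    obtain ⟨p, rfl⟩ : ∃ p, i = 4 * p := ⟨i / 4, by omega⟩
    exact ⟨w p, fun k hk => by rw [← hi k (by omega), hw _ _ hk]⟩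
  choose d hd using hblock
  exact ⟨d, hd⟩

theorem exists_occurrence_of_isPhiImage (h : IsCircularFactor c (4 * m) w) (hm : 1 ≤ m)
    (hc : IsPhiImage c d) (hw : IsPhiImage w w) (j : ℕ) :
    ∃ q, ∀ l < m + 1, w (q + l) = d (j + l) := by
  obtain ⟨i, hmod, hi⟩ :=
    h.exists_occurrence_mod_four_eq hc.isXXYY hw.isXXYY (by omega) (4 * j + 2)
  obtain ⟨q, rfl⟩ : ∃ q, i = 4 * q + 2 := ⟨i / 4, by omega⟩
  have hletter : ∀ l, ∀ k < 4, 2 ≤ 4 * l + k → 4 * l + k < 4 * m + 2 →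
      phiLetter (w (q + l)) k = phiLetter (d (j + l)) k := fun l k hk hlow hhigh => by
    rw [← hw _ _ hk, ← hc _ _ hk]
    convert hi (4 * l + k - 2) (by omega) using 2 <;> omega
  refine ⟨q, fun l hl => ?_⟩
  obtain hlm | rfl := Nat.lt_succ_iff_lt_or_eq.mp hl
  · exact eq_of_phiLetter_two_three _ _ (hletter l 2 (by omega) (by omega) (by omega))
      (hletter l 3 (by omega) (by omega) (by omega))
  · exact eq_of_phiLetter_zero_one _ _ (hletter l 0 (by omega) (by omega) (by omega))
      (hletter l 1 (by omega) (by omega) (by omega))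

theorem exists_desubstitution (h : IsCircularFactor c L w) (hw : IsPhiImage w w) (hL : 3 ≤ L) :
    ∃ m d, L = 4 * m ∧ Function.Periodic d m ∧ ∀ j, ∃ q, ∀ l < m + 1, w (q + l) = d (j + l) := by
  obtain ⟨s, hs⟩ := h.exists_isXXYY_shift hw.isXXYY hL
  have hshift := h.shift s
  obtain ⟨m, rfl⟩ := hshift.four_dvd hs
  obtain ⟨d, hd⟩ := hshift.exists_isPhiImage hs hw (by omega)
  exact ⟨m, d, rfl, hd.periodic_of_mul_four hshift.periodic,
    hshift.exists_occurrence_of_isPhiImage (by omega) hd hw⟩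

end IsCircularFactor

theorem IsPhiImage.not_isCircularFactor_two {w : ℕ → Letter} (hw : IsPhiImage w w)
    (c : ℕ → Letter) : ¬ IsCircularFactor c 2 w := by
  intro h
  obtain ⟨i, hi⟩ := h.exists_occurrence 0
  obtain ⟨j, hj⟩ := h.exists_occurrence 1
  refine hw.succ_ne_of_eq_succ (i := i) (j := j) ?_ ?_
  · exact (hi 0 (by norm_num)).trans ((h.periodic 0).symm.trans (hj 1 (by norm_num)).symm)
  · exact (hi 1 (by norm_num)).trans (hj 0 (by norm_num)).symm

theorem IsPhiImage.not_isCircularFactor {w : ℕ → Letter} (hw : IsPhiImage w w) {L : ℕ}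
    (hL : 2 ≤ L) (c : ℕ → Letter) : ¬ IsCircularFactor c L w := by
  induction L using Nat.strong_induction_on generalizing c with
  | _ L ih =>
    intro h
    obtain rfl | hL₃ := hL.eq_or_lt
    · exact hw.not_isCircularFactor_two c h
    obtain ⟨m, d, rfl, hd, hocc⟩ := h.exists_desubstitution hw hL₃
    obtain rfl | hm : m = 1 ∨ 2 ≤ m := by omega
    · obtain ⟨q, hq⟩ := hocc 0
      exact hw.succ_ne q ((hq 1 (by norm_num)).trans ((hd 0).trans (hq 0 (by norm_num)).symm))
    · refine ih m (by omega) hm d ⟨hd, fun j => isFactor_toListW_iff.mpr ?_⟩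
      obtain ⟨q, hq⟩ := hocc j
      exact ⟨q, fun l hl => hq l (hl.trans (Nat.lt_succ_self m))⟩

end Descent

theorem stmt9 (w : ℕ → Letter) (hw : IsFixedPointWord w)
    (v : List Letter) (hv : IsFactor v w) (hlen : 2 ≤ v.length) :
    ∃ a b : List Letter, v = a ++ b ∧ a ≠ [] ∧ b ≠ [] ∧ ¬ IsFactor (b ++ a) w := by
  by_contra! hconj
  have hrotate : ∀ s, IsFactor (v.rotate s) w := isFactor_rotate_of_forall_append hv hconj
  exact hw.isPhiImage.not_isCircularFactor hlen _
    (isCircularFactor_periodicWord (by omega) hrotate)
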